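/- Let X be a paracompact connected space, Z = □_{s∈S} Z_s a box product of equiconnected metrizable spaces, and g : X → Z a Baire-one map. Then there exists a separately continuous map f : X² → Z with f(x,x) = g(x) for all x ∈ X. -/

import Mathlib

open Filter Topology Set

/-- The box topology on a product of topological spaces: generated by all boxes
`∏ s, G s` with each `G s` open. -/
def boxTopology {S : Type*} {X : S → Type*} [∀ s, TopologicalSpace (X s)] :
    TopologicalSpace (∀ s, X s) :=
  TopologicalSpace.generateFrom
    {U | ∃ G : ∀ s, Set (X s), (∀ s, IsOpen (G s)) ∧ U = Set.univ.pi G}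

/-- `σ(a)`: the set of points differing from `a` in only finitely many coordinates. -/
def smallBox {S : Type*} {X : S → Type*} (a : ∀ s, X s) : Set (∀ s, X s) :=
  {x | {s | x s ≠ a s}.Finite}


namespace Stmt14

section box
variable {S : Type*} {Z : S → Type*} [∀ s, TopologicalSpace (Z s)]

lemma isOpen_box (G : ∀ s, Set (Z s)) (hG : ∀ s, IsOpen (G s)) :
    IsOpen[boxTopology] (Set.univ.pi G) :=
  TopologicalSpace.isOpen_generateFrom_of_mem ⟨G, hG, rfl⟩

lemma continuous_coord {X : Type*} [TopologicalSpace X] (h : X → ∀ s, Z s)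
    (hc : @Continuous X (∀ s, Z s) _ boxTopology h) (s : S) : Continuous fun x => h x s := by
  classical
  refine continuous_def.2 fun U hU => ?_
  have hop := isOpen_box (Function.update (fun s => (Set.univ : Set (Z s))) s U) (by
    intro r
    by_cases hr : r = s
    · subst hr; simpa using hU
    · simp [hr])
  have := (@continuous_def X (∀ s, Z s) _ boxTopology h).1 hc _ hop
  convert this using 1
  ext x
  simp only [Set.mem_preimage, Set.mem_univ_pi]
  constructor
  · intro hx r
    by_cases hr : r = s
    · subst hr; simpa using hx
    · simp [hr]
  · intro hx
    simpa using hx s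

lemma tendsto_coord (u : ℕ → ∀ s, Z s) (z : ∀ s, Z s)
    (hc : Tendsto u atTop (@nhds _ boxTopology z)) (s : S) :
    Tendsto (fun n => u n s) atTop (𝓝 (z s)) := by
  have : @Continuous _ _ boxTopology _ (fun z : ∀ s, Z s => z s) :=
    @continuous_coord S Z _ (∀ s, Z s) boxTopology id (@continuous_id _ boxTopology) s
  exact (@Continuous.tendsto _ _ boxTopology _ _ this z).comp hc

lemma box_continuous {X : Type*} [TopologicalSpace X] (f : X → ∀ s, Z s) (a : ∀ s, Z s)
    (F : Set S) (hF : F.Finite) (hc : ∀ s, Continuous fun x => f x s)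
    (hfa : ∀ s ∉ F, ∀ x, f x s = a s) : @Continuous X (∀ s, Z s) _ boxTopology f := by
  refine continuous_generateFrom_iff.2 ?_
  rintro _ ⟨G, hG, rfl⟩
  by_cases h : ∀ s ∉ F, a s ∈ G s
  · have : f ⁻¹' (Set.univ.pi G) = ⋂ s ∈ F, (fun x => f x s) ⁻¹' (G s) := by
      ext x
      simp only [Set.mem_preimage, Set.mem_univ_pi, Set.mem_iInter]
      refine ⟨fun hx s _ => hx s, fun hx s => ?_⟩
      by_cases hs : s ∈ F
      · exact hx s hs
      · rw [hfa s hs]; exact h s hs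
    rw [this]
    exact hF.isOpen_biInter fun s _ => (hG s).preimage (hc s)
  · push Not at h
    obtain ⟨s, hs, has⟩ := h
    have : f ⁻¹' (Set.univ.pi G) = ∅ := by
      ext x
      simp only [Set.mem_preimage, Set.mem_univ_pi, Set.mem_empty_iff_false, iff_false]
      intro hx
      exact has (hfa s hs x ▸ hx s)
    rw [this]; exact isOpen_empty

lemma tail_finite [∀ s, T1Space (Z s)] (u : ℕ → ∀ s, Z s) (z : ∀ s, Z s)
    (hc : Tendsto u atTop (@nhds _ boxTopology z)) :
    ∃ N, {s | ∃ n ≥ N, u n s ≠ z s}.Finite := by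
  classical
  by_contra hcon
  push Not at hcon
  obtain ⟨f, hf1, hf2⟩ := exists_seq_of_forall_finset_exists
    (fun p : ℕ × S => u p.1 p.2 ≠ z p.2) (fun p q => p.2 ≠ q.2 ∧ p.1 < q.1) (by
      intro T _
      have hinf := hcon (T.sup Prod.fst + 1)
      obtain ⟨s, ⟨n, hn, hns⟩, hsT⟩ := Set.Infinite.exists_notMem_finset hinf (T.image Prod.snd)
      refine ⟨(n, s), hns, fun p hp => ⟨?_, ?_⟩⟩
      · intro h
        exact hsT (Finset.mem_image.2 ⟨p, hp, h⟩)
      · have := Finset.le_sup (f := Prod.fst) hp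
        simp only
        omega)
  have hmono : StrictMono fun i => (f i).1 := fun i j hij => (hf2 i j hij).2
  have hinj : ∀ i j, (f i).2 = (f j).2 → i = j := by
    intro i j hij
    rcases lt_trichotomy i j with h | h | h
    · exact absurd hij (hf2 i j h).1
    · exact h
    · exact absurd hij.symm (hf2 j i h).1
  let B : ∀ s, Set (Z s) := fun s => {p | ∃ i, (f i).2 = s ∧ p = u (f i).1 s}
  have hB : ∀ s, (B s).Subsingleton := by
    rintro s p ⟨i, hi, rfl⟩ q ⟨j, hj, rfl⟩
    rw [hinj i j (hi.trans hj.symm)]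
  have hop := isOpen_box (fun s => (B s)ᶜ) fun s => (hB s).finite.isClosed.isOpen_compl
  have hz : z ∈ Set.univ.pi fun s => (B s)ᶜ := by
    rw [Set.mem_univ_pi]
    rintro s ⟨i, rfl, hi⟩
    exact hf1 i hi.symm
  have hev := hc ((@mem_nhds_iff (∀ s, Z s) boxTopology z _).2 ⟨_, subset_rfl, hop, hz⟩)
  obtain ⟨N, hN⟩ := mem_atTop_sets.1 hev
  have := hN (f N).1 (hmono.id_le N)
  rw [Set.mem_preimage, Set.mem_univ_pi] at this
  exact this (f N).2 ⟨N, rfl, rfl⟩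

lemma conn_finite {X : Type*} [TopologicalSpace X] [ConnectedSpace X]
    [∀ s, TopologicalSpace.MetrizableSpace (Z s)] (h : X → ∀ s, Z s)
    (hc : @Continuous X (∀ s, Z s) _ boxTopology h) (x₀ x : X) :
    {s | h x s ≠ h x₀ s}.Finite := by
  classical
  let : ∀ s, MetricSpace (Z s) := fun s => TopologicalSpace.metrizableSpaceMetric (Z s)
  by_contra hinf
  have hinf : {s | h x s ≠ h x₀ s}.Infinite := hinf
  let k : ℕ → S := fun i => (hinf.natEmbedding _ i : S)
  have hk : Function.Injective k := fun i j hij =>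
    (hinf.natEmbedding _).injective (Subtype.ext hij)
  have hkne : ∀ i, h x (k i) ≠ h x₀ (k i) := fun i => (hinf.natEmbedding _ i).2
  let w : S → ℝ := Function.extend k (fun i => (i : ℝ) / dist (h x (k i)) (h x₀ (k i))) 0
  have hwk : ∀ i, w (k i) = (i : ℝ) / dist (h x (k i)) (h x₀ (k i)) := fun i =>
    hk.extend_apply _ _ i
  have hw : ∀ s, 0 ≤ w s := by
    intro s
    by_cases hs : ∃ i, k i = s
    · obtain ⟨i, rfl⟩ := hs
      rw [hwk]; positivity
    · simp [w, Function.extend_apply' _ _ _ hs]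
  have key : ∀ y, ∀ᶠ y' in 𝓝 y, ∀ s, w s * dist (h y' s) (h y s) < 1 := by
    intro y
    have hop := isOpen_box (fun s => {p : Z s | w s * dist p (h y s) < 1}) fun s =>
      isOpen_lt (by fun_prop) continuous_const
    have := (@continuous_def X (∀ s, Z s) _ boxTopology h).1 hc _ hop
    have hm := this.mem_nhds (x := y) (by simp)
    filter_upwards [hm] with y' hy' s
    exact (Set.mem_univ_pi.1 hy') s
  let A : Set X := {y | ∃ C : ℝ, ∀ s, w s * dist (h y s) (h x₀ s) ≤ C}
  have hstep : ∀ y y', (∀ s, w s * dist (h y' s) (h y s) < 1) → y ∈ A → y' ∈ A := by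
    rintro y y' hyy ⟨C, hC⟩
    refine ⟨1 + C, fun s => ?_⟩
    have := mul_le_mul_of_nonneg_left (dist_triangle (h y' s) (h y s) (h x₀ s)) (hw s)
    have h1 := hyy s
    have h2 := hC s
    linarith
  have hA : IsClopen A := by
    constructor
    · rw [← isOpen_compl_iff, isOpen_iff_mem_nhds]
      intro y hy
      filter_upwards [key y] with y' hy' hA'
      exact hy (hstep y' y (fun s => by rw [dist_comm]; exact hy' s) hA')
    · rw [isOpen_iff_mem_nhds]
      intro y hy
      filter_upwards [key y] with y' hy'
      exact hstep y y' hy' hy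
  have hx₀ : x₀ ∈ A := ⟨0, fun s => by simp⟩
  have hx : x ∈ A := by
    rw [hA.eq_univ ⟨x₀, hx₀⟩]; trivial
  obtain ⟨C, hC⟩ := hx
  obtain ⟨i, hi⟩ := exists_nat_gt C
  have := hC (k i)
  rw [hwk, div_mul_cancel₀ _ (dist_ne_zero.2 (hkne i))] at this
  linarith

end box

section single
variable {Z : Type*} [TopologicalSpace Z] (lam : Z → Z → unitInterval → Z)

lemma tube (hlamc : Continuous fun p : Z × Z × unitInterval => lam p.1 p.2.1 p.2.2)
    (hd : ∀ (x : Z) (t : unitInterval), lam x x t = x) (z : Z) (U : Set Z) (hU : U ∈ 𝓝 z) :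
    ∀ᶠ p : Z × Z in 𝓝 (z, z), ∀ t, lam p.1 p.2 t ∈ U := by
  have := isCompact_univ.eventually_forall_of_forall_eventually (X := Z × Z)
    (x₀ := (z, z)) (K := (Set.univ : Set unitInterval))
    (P := fun p t => lam p.1 p.2 t ∈ U) (by
      intro t _
      have hc : Continuous fun q : (Z × Z) × unitInterval => lam q.1.1 q.1.2 q.2 :=
        hlamc.comp (by fun_prop : Continuous fun q : (Z × Z) × unitInterval =>
          (q.1.1, q.1.2, q.2))
      have := hc.tendsto ((z, z), t)
      simp only [hd] at this
      exact this hU)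
  filter_upwards [this] with p hp t using hp t trivial

/-- clamp to the unit interval -/
noncomputable def cl (r : ℝ) : unitInterval := Set.projIcc 0 1 zero_le_one r

lemma continuous_cl : Continuous cl := continuous_projIcc (h := zero_le_one)
lemma cl_of_le {r : ℝ} (h : r ≤ 0) : cl r = 0 := Set.projIcc_of_le_left _ h
lemma cl_of_ge {r : ℝ} (h : 1 ≤ r) : cl r = 1 := Set.projIcc_of_right_le _ h

variable {X : Type*} (h : ℕ → X → Z)

/-- piecewise path -/
noncomputable def Q : ℕ → X → ℝ → Z
  | 0, x, _ => h 0 x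
  | n + 1, x, v => lam (Q n x v) (h (n + 1) x) (cl (v - n))

lemma Q_ge (h1 : ∀ (x y : Z), lam x y 1 = y) (n : ℕ) (x : X) (v : ℝ) (hv : (n : ℝ) ≤ v) :
    Q lam h n x v = h n x := by
  cases n with
  | zero => rfl
  | succ n =>
    rw [Q, cl_of_ge, h1]
    push_cast at hv
    linarith

lemma Q_le (h0 : ∀ (x y : Z), lam x y 0 = x) (n m : ℕ) (hnm : n ≤ m) (x : X) (v : ℝ)
    (hv : v ≤ n) : Q lam h m x v = Q lam h n x v := by
  induction m, hnm using Nat.le_induction with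
  | base => rfl
  | succ m hm ih =>
    rw [Q, cl_of_le, h0, ih]
    have : (n : ℝ) ≤ m := by exact_mod_cast hm
    linarith

lemma Q_const (hd : ∀ (x : Z) (t : unitInterval), lam x x t = x) (n : ℕ) (x : X) (v : ℝ) (a : Z)
    (ha : ∀ n, h n x = a) : Q lam h n x v = a := by
  induction n with
  | zero => exact ha 0
  | succ n ih => rw [Q, ih, ha, hd]

/-- the path -/
noncomputable def P (x : X) (v : ℝ) : Z := Q lam h (⌊v⌋₊ + 1) x v

lemma P_eq (h0 : ∀ (x y : Z), lam x y 0 = x) (m : ℕ) (x : X) (v : ℝ) (hv : v ≤ m) :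
    P lam h x v = Q lam h m x v := by
  have h2 : v ≤ ((⌊v⌋₊ + 1 : ℕ) : ℝ) := by
    push_cast; exact (Nat.lt_floor_add_one v).le
  rcases le_total m (⌊v⌋₊ + 1) with hm | hm
  · exact Q_le lam h h0 _ _ hm x v hv
  · exact (Q_le lam h h0 _ _ hm x v h2).symm

variable [TopologicalSpace X]

lemma continuous_Q (hlamc : Continuous fun p : Z × Z × unitInterval => lam p.1 p.2.1 p.2.2)
    (hc : ∀ n, Continuous (h n)) (n : ℕ) : Continuous fun p : X × ℝ => Q lam h n p.1 p.2 := by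
  induction n with
  | zero => exact (hc 0).comp continuous_fst
  | succ n ih =>
    have h3 := continuous_cl
    have h4 := hc (n + 1)
    exact hlamc.comp (by fun_prop : Continuous fun p : X × ℝ =>
      (Q lam h n p.1 p.2, h (n + 1) p.1, cl (p.2 - n)))

lemma continuous_P (hlamc : Continuous fun p : Z × Z × unitInterval => lam p.1 p.2.1 p.2.2)
    (h0 : ∀ (x y : Z), lam x y 0 = x)
    (hc : ∀ n, Continuous (h n)) : Continuous fun p : X × ℝ => P lam h p.1 p.2 := by
  rw [continuous_iff_continuousAt]
  rintro ⟨x, v⟩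
  obtain ⟨m, hm⟩ := exists_nat_gt v
  refine (continuous_Q lam h hlamc hc m).continuousAt.congr ?_
  have : ∀ᶠ p : X × ℝ in 𝓝 (x, v), p.2 < m :=
    continuous_snd.continuousAt.eventually_lt continuousAt_const hm
  filter_upwards [this] with p hp
  exact (P_eq lam h h0 m p.1 p.2 hp.le).symm

lemma single [TopologicalSpace.MetrizableSpace Z]
    (hlamc : Continuous fun p : Z × Z × unitInterval => lam p.1 p.2.1 p.2.2)
    (h0 : ∀ (x y : Z), lam x y 0 = x)
    (h1 : ∀ (x y : Z), lam x y 1 = y)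
    (hd : ∀ (x : Z) (t : unitInterval), lam x x t = x)
    (hc : ∀ n, Continuous (h n)) (g : X → Z)
    (hg : ∀ x, Tendsto (fun n => h n x) atTop (𝓝 (g x))) (a : Z) :
    ∃ f : X → X → Z, (∀ x, Continuous (f x)) ∧ (∀ y, Continuous fun x => f x y) ∧
      (∀ x, f x x = g x) ∧ ∀ x, (∀ n, h n x = a) → ∀ y, f x y = a ∧ f y x = a := by
  classical
  let : MetricSpace Z := TopologicalSpace.metrizableSpaceMetric Z
  let : MetricSpace (ℕ → Z) := PiCountable.metricSpace
  let G : X → ℕ → Z := fun x n => h n x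
  have hG : Continuous G := continuous_pi hc
  let d : X → X → ℝ := fun x y => dist (G x) (G y)
  have hdc : Continuous fun p : X × X => d p.1 p.2 := by
    exact (hG.comp continuous_fst).dist (hG.comp continuous_snd)
  have hdk : ∀ x y k, d x y < (1 / 2) ^ k → dist (h k x) (h k y) ≤ d x y := by
    intro x y k hk
    have h3 := PiCountable.min_dist_le_dist_pi (G x) (G y) k
    simp only [Encodable.encode_nat, inv_eq_one_div] at h3
    rcases min_le_iff.1 h3 with h4 | h4
    · exact absurd h4 (not_le.2 hk)
    · exact h4
  have hd0 : ∀ x y, d x y = 0 → ∀ n, h n x = h n y := fun x y hxy n =>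
    congrFun (dist_eq_zero.1 hxy) n
  have hg0 : ∀ x y, d x y = 0 → g x = g y := fun x y hxy =>
    tendsto_nhds_unique (hg x) (by simpa only [← hd0 x y hxy] using hg y)
  let f0 : X → X → Z := fun x y => if d x y = 0 then g x else P lam h x (- Real.logb 4 (d x y))
  have hf0off : ∀ x y, d x y ≠ 0 → ContinuousAt (fun p : X × X => f0 p.1 p.2) (x, y) := by
    intro x y hxy
    have hlog : ContinuousAt (fun p : X × X => - Real.logb 4 (d p.1 p.2)) (x, y) := by
      have : ContinuousAt (fun p : X × X => d p.1 p.2) (x, y) := hdc.continuousAt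
      simp only [Real.logb]
      exact ((this.log hxy).div_const _).neg
    have h5 : ContinuousAt (fun p : X × X => P lam h p.1 (- Real.logb 4 (d p.1 p.2))) (x, y) :=
      (continuous_P lam h hlamc h0 hc).continuousAt.comp
        (f := fun p : X × X => (p.1, - Real.logb 4 (d p.1 p.2)))
        (continuousAt_fst.prodMk hlog)
    refine h5.congr ?_
    filter_upwards [hdc.continuousAt.eventually_ne hxy] with p hp
    simp [f0, hp]
  have key : ∀ x₀, ∀ U ∈ 𝓝 (g x₀), ∃ δ > 0, ∀ x y, d x y < δ → d x x₀ ≤ d x y → f0 x y ∈ U := by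
    intro x₀ U hU
    have htube := tube lam hlamc hd (g x₀) U hU
    obtain ⟨ε, hε, hball⟩ := Metric.eventually_nhds_iff.1 htube
    obtain ⟨N, hN⟩ := Metric.tendsto_atTop.1 (hg x₀) (ε / 2) (half_pos hε)
    refine ⟨min ((4 : ℝ) ^ (-((N : ℝ) + 2))) (ε / 2), by positivity, fun x y hxy hle => ?_⟩
    have hxy1 := hxy.trans_le (min_le_left _ _)
    have hxy2 := hxy.trans_le (min_le_right _ _)
    by_cases hz : d x y = 0
    · have : d x x₀ = 0 := le_antisymm (hz ▸ hle) dist_nonneg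
      simp only [f0, hz, if_true, hg0 x x₀ this]
      exact mem_of_mem_nhds hU
    · have hpos : 0 < d x y := lt_of_le_of_ne dist_nonneg (Ne.symm hz)
      simp only [f0, hz, if_false]
      set v := - Real.logb 4 (d x y) with hv
      have hdv : d x y = (4 : ℝ) ^ (-v) := by
        rw [hv, neg_neg, Real.rpow_logb (by norm_num) (by norm_num) hpos]
      have hvN : (N : ℝ) + 2 < v := by
        rw [hdv] at hxy1
        have := (Real.rpow_lt_rpow_left_iff (by norm_num : (1 : ℝ) < 4)).1 hxy1
        linarith
      have hv0 : 0 ≤ v := by have : (0 : ℝ) ≤ N := N.cast_nonneg; linarith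
      have hfl := Nat.floor_le hv0
      have hclose : ∀ k : ℕ, N ≤ k → (k : ℝ) ≤ v + 1 → dist (h k x) (g x₀) < ε := by
        intro k hk hkv
        have hlt : d x x₀ < (1 / 2) ^ k := by
          refine hle.trans_lt ?_
          have e1 : (4 : ℝ) ^ (-v) = 2 ^ (-(2 * v)) := by
            rw [show (4 : ℝ) = 2 ^ (2 : ℝ) by norm_num, ← Real.rpow_mul (by norm_num)]
            congr 1; ring
          have e2 : ((1 : ℝ) / 2) ^ k = 2 ^ (-(k : ℝ)) := by
            rw [Real.rpow_neg (by norm_num), Real.rpow_natCast, one_div, inv_pow]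
          rw [hdv, e1, e2]
          apply Real.rpow_lt_rpow_of_exponent_lt (by norm_num)
          have : (0 : ℝ) ≤ N := N.cast_nonneg
          linarith
        have h6 := hdk x x₀ k hlt
        have h7 := hN k hk
        have h8 := dist_triangle (h k x) (h k x₀) (g x₀)
        linarith
      have hNf : N ≤ ⌊v⌋₊ := Nat.le_floor (by linarith)
      rw [P, Q, Q_ge lam h h1 _ _ _ hfl]
      refine hball (y := (h ⌊v⌋₊ x, h (⌊v⌋₊ + 1) x)) ?_ _
      rw [Prod.dist_eq]
      refine max_lt (hclose _ hNf (by linarith)) (hclose _ (by omega) ?_)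
      push_cast; linarith
  have hself : ∀ x, d x x = 0 := fun x => dist_self _
  have hf0y : ∀ x, Continuous (f0 x) := by
    intro x
    rw [continuous_iff_continuousAt]
    intro y
    by_cases hxy : d x y = 0
    · intro U hU
      have : f0 x y = g x := by simp [f0, hxy]
      rw [this] at hU
      obtain ⟨δ, hδ, hk⟩ := key x U hU
      have hcd : ContinuousAt (fun y => d x y) y :=
        (hdc.comp (Continuous.prodMk_right x)).continuousAt
      rw [Filter.mem_map]
      filter_upwards [hcd.eventually_lt continuousAt_const (hxy.trans_lt hδ)] with y' hy'
      exact hk x y' hy' (by rw [hself]; exact dist_nonneg)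
    · exact (hf0off x y hxy).comp (f := fun y => (x, y)) (Continuous.prodMk_right x).continuousAt
  have hf0x : ∀ y, Continuous fun x => f0 x y := by
    intro y
    rw [continuous_iff_continuousAt]
    intro x
    by_cases hxy : d x y = 0
    · intro U hU
      have : f0 x y = g y := by simp [f0, hxy, hg0 x y hxy]
      simp only [this] at hU
      obtain ⟨δ, hδ, hk⟩ := key y U hU
      have hcd : ContinuousAt (fun x => d x y) x :=
        (hdc.comp (Continuous.prodMk_left y)).continuousAt
      rw [Filter.mem_map]
      filter_upwards [hcd.eventually_lt continuousAt_const (hxy.trans_lt hδ)] with x' hx'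
      exact hk x' y hx' le_rfl
    · exact (hf0off x y hxy).comp (f := fun x => (x, y)) (Continuous.prodMk_left y).continuousAt
  have hf0d : ∀ x, f0 x x = g x := fun x => by simp [f0, hself]
  have hga : ∀ x, (∀ n, h n x = a) → g x = a := fun x hx =>
    tendsto_nhds_unique (hg x) (by simp only [hx]; exact tendsto_const_nhds)
  have hf0a : ∀ x, (∀ n, h n x = a) → ∀ y, f0 x y = a := by
    intro x hx y
    by_cases hxy : d x y = 0
    · simp [f0, hxy, hga x hx]
    · simp only [f0, hxy, if_false, P]
      exact Q_const lam h hd _ _ _ a hx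
  let e : X → ℝ := fun x => dist (G x) (fun _ => a)
  have hec : Continuous e := hG.dist continuous_const
  have he0 : ∀ x, e x = 0 ↔ ∀ n, h n x = a := fun x => by
    simp only [e, dist_eq_zero]; exact funext_iff
  refine ⟨fun x y => lam a (f0 x y) (cl (e y / e x)), ?_, ?_, ?_, ?_⟩
  · intro x
    have := hf0y x
    have h3 := continuous_cl
    exact hlamc.comp (by fun_prop : Continuous fun y => (a, f0 x y, cl (e y / e x)))
  · intro y
    rw [continuous_iff_continuousAt]
    intro x
    by_cases hx : e x = 0
    · have hxa := (he0 x).1 hx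
      intro U hU
      have hfa := hf0a x hxa y
      simp only [hfa, hd] at hU
      have ht := tube lam hlamc hd a U hU
      have htend : Tendsto (fun x => (a, f0 x y)) (𝓝 x) (𝓝 (a, a)) := by
        have := (hf0x y).tendsto x
        simp only [hfa] at this
        exact tendsto_const_nhds.prodMk_nhds this
      rw [Filter.mem_map]
      filter_upwards [htend.eventually ht] with x' hx'
      exact hx' _
    · have h4 : ContinuousAt (fun x => (a, f0 x y, cl (e y / e x))) x := by
        refine continuousAt_const.prodMk ((hf0x y).continuousAt.prodMk ?_)
        exact continuous_cl.continuousAt.comp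
          (continuousAt_const.div hec.continuousAt hx)
      exact hlamc.continuousAt.comp (f := fun x => (a, f0 x y, cl (e y / e x))) h4
  · intro x
    by_cases hx : e x = 0
    · have hxa := (he0 x).1 hx
      simp only [hf0a x hxa, hd, hga x hxa]
    · simp only [div_self hx, cl_of_ge le_rfl, h1, hf0d]
  · intro x hxa y
    have hx := (he0 x).2 hxa
    constructor
    · simp only [hf0a x hxa, hd]
    · simp only [hx, zero_div, cl_of_le le_rfl, h0]

end single

end Stmt14

theorem stmt_14 {X : Type*} [TopologicalSpace X] [ParacompactSpace X]
    [ConnectedSpace X] {S : Type*} {Z : S → Type*} [∀ s, TopologicalSpace (Z s)]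
    [∀ s, TopologicalSpace.MetrizableSpace (Z s)]
    (lam : ∀ s, Z s → Z s → unitInterval → Z s)
    (hlamc : ∀ s, Continuous fun p : Z s × Z s × unitInterval => lam s p.1 p.2.1 p.2.2)
    (h0 : ∀ s (x y : Z s), lam s x y 0 = x)
    (h1 : ∀ s (x y : Z s), lam s x y 1 = y)
    (hd : ∀ s (x : Z s) (t : unitInterval), lam s x x t = x) :
    letI : TopologicalSpace (∀ s, Z s) := boxTopology
    ∀ g : X → ∀ s, Z s,
      (∃ h : ℕ → X → ∀ s, Z s, (∀ n, Continuous (h n)) ∧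
        ∀ x, Tendsto (fun n => h n x) atTop (nhds (g x))) →
      ∃ f : X → X → ∀ s, Z s,
        (∀ x, Continuous (f x)) ∧ (∀ y, Continuous fun x => f x y) ∧
        ∀ x, f x x = g x := by
  intro g hh
  obtain ⟨h', hc', hg'⟩ := hh
  obtain ⟨x₀⟩ : Nonempty X := inferInstance
  obtain ⟨N, hN⟩ := Stmt14.tail_finite (fun n => h' n x₀) (g x₀) (hg' x₀)
  let h : ℕ → X → ∀ s, Z s := fun n => h' (n + N)
  let a : ∀ s, Z s := g x₀
  have hg : ∀ x, Tendsto (fun n => h n x) atTop (@nhds _ boxTopology (g x)) := fun x =>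
    (hg' x).comp (tendsto_add_atTop_nat N)
  have hna : ∀ n x, {s | h n x s ≠ a s}.Finite := by
    intro n x
    refine ((Stmt14.conn_finite (h n) (hc' _) x₀ x).union hN).subset ?_
    intro s hs
    by_cases hsx : h n x s = h n x₀ s
    · exact Or.inr ⟨n + N, by omega, fun hh => hs (hsx.trans hh)⟩
    · exact Or.inl hsx
  have hfin : ∀ x, {s | ∃ n, h n x s ≠ a s}.Finite := by
    intro x
    obtain ⟨M, hM⟩ := Stmt14.tail_finite (fun n => h n x) (g x) (hg x)
    have hfin1 : (⋃ n ∈ Set.Iic M, {s | h n x s ≠ a s}).Finite :=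
      (Set.finite_Iic M).biUnion fun n _ => hna n x
    refine (hfin1.union hM).subset ?_
    rintro s ⟨n, hn⟩
    by_cases hle : ∃ m ≤ M, h m x s ≠ a s
    · left
      obtain ⟨m, hm, hms⟩ := hle
      exact Set.mem_biUnion (Set.mem_Iic.2 hm) hms
    · right
      push Not at hle
      by_contra hcon
      have hall : ∀ n ≥ M, h n x s = g x s := by
        intro n hn
        by_contra hne
        exact hcon ⟨n, hn, hne⟩
      rcases le_total n M with hnM | hnM
      · exact hn (hle n hnM)
      · exact hn ((hall n hnM).trans ((hall M le_rfl).symm.trans (hle M le_rfl)))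
  choose f hf1 hf2 hf3 hf4 using fun s => Stmt14.single (lam s) (fun n x => h n x s) (hlamc s)
    (h0 s) (h1 s) (hd s) (fun n => Stmt14.continuous_coord (h n) (hc' _) s) (fun x => g x s)
    (fun x => Stmt14.tendsto_coord _ _ (hg x) s) (a s)
  refine ⟨fun x y s => f s x y, fun x => ?_, fun y => ?_, fun x => funext fun s => hf3 s x⟩
  · refine Stmt14.box_continuous _ a _ (hfin x) (fun s => hf1 s x) fun s hs y => ?_
    exact (hf4 s x (by simpa using hs) y).1
  · refine Stmt14.box_continuous _ a _ (hfin y) (fun s => hf2 s y) fun s hs x => ?_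
    exact (hf4 s y (by simpa using hs) x).2
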